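/- Let n ≥ 2 be an integer, let γ ⊆ {1,…,n} have cardinality k with 1 ≤ k ≤ n−1, and let 0 < σ²_min < σ²_max. For c ∈ ℝⁿ with S_γ(c) > 0, S(c) − S_γ(c) > 0, and with maximum likelihood variance estimates in [σ²_min, σ²_max], the exact normalized maximum likelihood code length satisfies −ln f_nml(c) = (k/2) ln S_γ(c) + ((n−k)/2) ln (S(c) − S_γ(c)) − ln Γ(k/2) − ln Γ((n−k)/2) + (n/2) ln π + 2 ln ln(σ²_max/σ²_min), where f_nml is the maximized likelihood Π_{i∈γ} φ(c_i; 0, S_γ(c)/k) Π_{i∉γ} φ(c_i; 0, (S(c)−S_γ(c))/(n−k)) normalized by its integral over the region R = {c′ ∈ ℝⁿ : σ²_min ≤ S_γ(c′)/k ≤ σ²_max, σ²_min ≤ (S(c′) − S_γ(c′))/(n−k) ≤ σ²_max}. -/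

import Mathlib

open MeasureTheory Real Finset

/-- `Sg γ c = ∑_{i ∈ γ} c_i²`. -/
noncomputable def Sg {n : ℕ} (γ : Finset (Fin n)) (c : Fin n → ℝ) : ℝ :=
  ∑ i ∈ γ, (c i) ^ 2

/-- `Stot c = ∑_{i=1}^n c_i²`. -/
noncomputable def Stot {n : ℕ} (c : Fin n → ℝ) : ℝ :=
  ∑ i, (c i) ^ 2

/-- Centered Gaussian density `φ(x; 0, σ²) = (2πσ²)^{-1/2} exp(-x²/(2σ²))`. -/
noncomputable def gauss (x σ2 : ℝ) : ℝ :=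
  (2 * Real.pi * σ2) ^ (-(1 : ℝ) / 2) * Real.exp (-(x ^ 2) / (2 * σ2))

/-- The maximized likelihood of `c` under the extended model with retained set `γ`. -/
noncomputable def maxLik {n : ℕ} (γ : Finset (Fin n)) (c : Fin n → ℝ) : ℝ :=
  (∏ i ∈ γ, gauss (c i) (Sg γ c / γ.card)) *
    ∏ i ∈ γᶜ, gauss (c i) ((Stot c - Sg γ c) / ((n : ℝ) - γ.card))

/-- Likelihood of one block of size `m` at its ML variance, as a function of the energy `s`. -/
noncomputable def blk (m : ℕ) (s : ℝ) : ℝ :=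
  (2 * Real.pi * (s / m)) ^ (-(m : ℝ) / 2) * Real.exp (-(m : ℝ) / 2)

open Classical in
/-- `blk` cut off to the admissible range of energies. -/
noncomputable def cut (a b : ℝ) (m : ℕ) (s : ℝ) : ℝ :=
  if a ≤ s / m ∧ s / m ≤ b then blk m s else 0

theorem prod_gauss {ι : Type*} (γ : Finset ι) (c : ι → ℝ) (m : ℕ) (hm : 1 ≤ m)
    (hγ : γ.card = m) (s : ℝ) (hs : 0 < s) (hsum : ∑ i ∈ γ, (c i) ^ 2 = s) :
    ∏ i ∈ γ, gauss (c i) (s / m) = blk m s := by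
  have hm' : (0 : ℝ) < m := by exact_mod_cast hm
  unfold gauss blk
  rw [Finset.prod_mul_distrib, Finset.prod_const, hγ, ← Real.exp_sum]
  congr 1
  · rw [← Real.rpow_natCast, ← Real.rpow_mul (by positivity)]
    congr 1
    ring
  · congr 1
    rw [← Finset.sum_div, Finset.sum_neg_distrib, hsum]
    field_simp

theorem blk_sq (m : ℕ) (hm : 1 ≤ m) (y : ℝ) (hy : 0 < y) :
    y ^ (m - 1) * blk m (y ^ 2) = blk m 1 * y⁻¹ := by
  have hm' : (0 : ℝ) < m := by exact_mod_cast hm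
  unfold blk
  have e : 2 * Real.pi * (y ^ 2 / m) = (2 * Real.pi * (1 / m)) * y ^ 2 := by ring
  have e2 : (y ^ 2) ^ (-(m : ℝ) / 2) = (y ^ m)⁻¹ := by
    rw [← Real.rpow_natCast y 2, ← Real.rpow_mul hy.le, ← Real.rpow_natCast y m,
      ← Real.rpow_neg hy.le]
    congr 1
    push_cast
    ring
  rw [e, Real.mul_rpow (by positivity) (by positivity), e2]
  obtain ⟨j, rfl⟩ : ∃ j, m = j + 1 := ⟨m - 1, by omega⟩
  simp only [Nat.add_sub_cancel]
  rw [pow_succ]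
  field_simp

theorem radial_int (a b : ℝ) (ha : 0 < a) (hab : a < b) (m : ℕ) (hm : 1 ≤ m) :
    ∫ y in Set.Ioi (0 : ℝ), y ^ (m - 1) • cut a b m (y ^ 2)
      = blk m 1 * (Real.log (b / a) / 2) := by
  have hm' : (0 : ℝ) < m := by exact_mod_cast hm
  have hb : 0 < b := ha.trans hab
  have hA : 0 < √(m * a) := by positivity
  have hB : 0 < √(m * b) := by positivity
  have hAB : √(m * a) ≤ √(m * b) := Real.sqrt_le_sqrt (by nlinarith)
  have key : ∀ y ∈ Set.Ioi (0 : ℝ), y ^ (m - 1) • cut a b m (y ^ 2)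
      = (Set.Icc (√(m * a)) (√(m * b))).indicator (fun y => blk m 1 * y⁻¹) y := by
    intro y hy
    have hy : 0 < y := hy
    have hiff : (a ≤ y ^ 2 / m ∧ y ^ 2 / m ≤ b) ↔ y ∈ Set.Icc (√(m * a)) (√(m * b)) := by
      rw [Set.mem_Icc, Real.sqrt_le_left hy.le, Real.le_sqrt (by positivity), le_div_iff₀ hm',
        div_le_iff₀ hm', mul_comm a, mul_comm b]
      positivity
    unfold cut
    by_cases h : y ∈ Set.Icc (√(m * a)) (√(m * b))
    · rw [if_pos (hiff.2 h), Set.indicator_of_mem h, smul_eq_mul, blk_sq m hm y hy]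
    · rw [if_neg (fun h' => h (hiff.1 h')), Set.indicator_of_notMem h, smul_zero]
  have hsub : Set.Icc (√(m * a)) (√(m * b)) ⊆ Set.Ioi (0 : ℝ) :=
    fun y hy => lt_of_lt_of_le hA hy.1
  rw [setIntegral_congr_fun measurableSet_Ioi key,
    setIntegral_indicator measurableSet_Icc,
    Set.inter_eq_right.2 hsub,
    integral_Icc_eq_integral_Ioc, ← intervalIntegral.integral_of_le hAB,
    intervalIntegral.integral_const_mul, integral_inv_of_pos hA hB,
    ← Real.sqrt_div (by positivity), Real.log_sqrt (by positivity),
    mul_div_mul_left _ _ hm'.ne']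

theorem block_int (ι : Type) [Fintype ι] (a b : ℝ) (ha : 0 < a) (hab : a < b) (m : ℕ)
    (hm : 1 ≤ m) (hc : Fintype.card ι = m) :
    ∫ x : ι → ℝ, cut a b m (∑ i, (x i) ^ 2)
      = Real.pi ^ ((m : ℝ) / 2) / Real.Gamma ((m : ℝ) / 2) * blk m 1 * Real.log (b / a) := by
  have hm' : (0 : ℝ) < m := by exact_mod_cast hm
  have : Nonempty ι := Fintype.card_pos_iff.1 (by omega)
  have h1 := (EuclideanSpace.volume_preserving_symm_measurableEquiv_toLp ι).integral_comp'
    (fun x : ι → ℝ => cut a b m (∑ i, (x i) ^ 2))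
  rw [← h1]
  have h2 : ∀ x : EuclideanSpace ℝ ι,
      cut a b m (∑ i, ((MeasurableEquiv.toLp 2 (ι → ℝ)).symm x i) ^ 2)
        = (fun r => cut a b m (r ^ 2)) ‖x‖ := by
    intro x
    simp only [EuclideanSpace.norm_sq_eq, Real.norm_eq_abs, sq_abs]
    rfl
  simp_rw [h2]
  rw [integral_fun_norm_addHaar volume (fun r => cut a b m (r ^ 2)), finrank_euclideanSpace, hc,
    radial_int a b ha hab m hm, measureReal_def, EuclideanSpace.volume_ball, hc]
  have hG : 0 < Real.Gamma ((m : ℝ) / 2) := Real.Gamma_pos_of_pos (by positivity)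
  rw [Real.Gamma_add_one (by positivity)]
  have hp : √Real.pi ^ m = Real.pi ^ ((m : ℝ) / 2) := by
    rw [Real.sqrt_eq_rpow, ← Real.rpow_natCast, ← Real.rpow_mul Real.pi_pos.le]
    congr 1
    ring
  rw [hp, ENNReal.ofReal_one, one_pow, one_mul, ENNReal.toReal_ofReal (by positivity)]
  simp only [smul_eq_mul, nsmul_eq_mul]
  field_simp

theorem Stot_sub {n : ℕ} (γ : Finset (Fin n)) (c : Fin n → ℝ) :
    Stot c - Sg γ c = ∑ i ∈ γᶜ, (c i) ^ 2 := by
  unfold Stot Sg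
  rw [← Finset.sum_add_sum_compl γ]
  ring

theorem maxLik_eq (n k : ℕ) (γ : Finset (Fin n)) (hγ : γ.card = k)
    (hk1 : 1 ≤ k) (l : ℕ) (hl1 : 1 ≤ l) (hl : n = k + l)
    (c : Fin n → ℝ) (hSg : 0 < Sg γ c) (hSN : 0 < Stot c - Sg γ c) :
    maxLik γ c = blk k (Sg γ c) * blk l (Stot c - Sg γ c) := by
  have e : (n : ℝ) - k = l := by rw [hl]; push_cast; ring
  unfold maxLik
  rw [hγ, e, prod_gauss γ c k hk1 hγ _ hSg rfl, prod_gauss γᶜ c l hl1 _ _ hSN (Stot_sub γ c).symm]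
  rw [Finset.card_compl, hγ, Fintype.card_fin]
  omega

theorem region_int (n k : ℕ) (γ : Finset (Fin n)) (hγ : γ.card = k)
    (hk1 : 1 ≤ k) (l : ℕ) (hl1 : 1 ≤ l) (hl : n = k + l) (a b : ℝ) (ha : 0 < a) (hab : a < b) :
    ∫ c' in {c' : Fin n → ℝ |
            a ≤ Sg γ c' / k ∧ Sg γ c' / k ≤ b ∧
            a ≤ (Stot c' - Sg γ c') / (l : ℝ) ∧
            (Stot c' - Sg γ c') / (l : ℝ) ≤ b},
          maxLik γ c'
    = (Real.pi ^ ((k : ℝ) / 2) / Real.Gamma ((k : ℝ) / 2) * blk k 1 * Real.log (b / a)) *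
      (Real.pi ^ ((l : ℝ) / 2) / Real.Gamma ((l : ℝ) / 2) * blk l 1 * Real.log (b / a)) := by
  have hk' : (0 : ℝ) < k := by exact_mod_cast hk1
  have hl' : (0 : ℝ) < l := by exact_mod_cast hl1
  have m1 : Measurable (fun c : Fin n → ℝ => Sg γ c) := by unfold Sg; fun_prop
  have m2 : Measurable (fun c : Fin n → ℝ => Stot c) := by unfold Stot; fun_prop
  rw [← integral_indicator]
  swap
  · refine (measurableSet_le measurable_const (m1.div_const _)).inter
      ((measurableSet_le (m1.div_const _) measurable_const).inter
      ((measurableSet_le measurable_const ((m2.sub m1).div_const _)).inter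
      (measurableSet_le ((m2.sub m1).div_const _) measurable_const)))
  have hpt : ∀ c : Fin n → ℝ, Set.indicator {c' : Fin n → ℝ |
            a ≤ Sg γ c' / k ∧ Sg γ c' / k ≤ b ∧
            a ≤ (Stot c' - Sg γ c') / (l : ℝ) ∧
            (Stot c' - Sg γ c') / (l : ℝ) ≤ b} (fun c' => maxLik γ c') c
      = (fun z : ({i // i ∈ γ} → ℝ) × ({i // ¬ i ∈ γ} → ℝ) =>
          cut a b k (∑ i, (z.1 i) ^ 2) * cut a b l (∑ i, (z.2 i) ^ 2))
        (MeasurableEquiv.piEquivPiSubtypeProd (fun _ => ℝ) (fun i => i ∈ γ) c) := by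
    intro c
    have s1 : ∑ i : {i // i ∈ γ}, (c i) ^ 2 = Sg γ c := by
      unfold Sg
      exact (Finset.sum_subtype γ (fun x => Iff.rfl) (fun i => (c i) ^ 2)).symm
    have s2 : ∑ i : {i // ¬ i ∈ γ}, (c i) ^ 2 = Stot c - Sg γ c := by
      rw [Stot_sub]
      exact (Finset.sum_subtype γᶜ (fun x => Finset.mem_compl) (fun i => (c i) ^ 2)).symm
    change _ = cut a b k (∑ i : {i // i ∈ γ}, (c i) ^ 2) *
      cut a b l (∑ i : {i // ¬ i ∈ γ}, (c i) ^ 2)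
    rw [s1, s2]
    unfold cut
    by_cases h1 : a ≤ Sg γ c / k ∧ Sg γ c / k ≤ b
    · by_cases h2 : a ≤ (Stot c - Sg γ c) / (l : ℝ) ∧ (Stot c - Sg γ c) / (l : ℝ) ≤ b
      · rw [if_pos h1, if_pos h2, Set.indicator_of_mem (by exact ⟨h1.1, h1.2, h2.1, h2.2⟩)]
        exact maxLik_eq n k γ hγ hk1 l hl1 hl c
          ((div_pos_iff_of_pos_right hk').1 (ha.trans_le h1.1))
          ((div_pos_iff_of_pos_right hl').1 (ha.trans_le h2.1))
      · rw [if_neg h2, mul_zero, Set.indicator_of_notMem]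
        exact fun h => h2 ⟨h.2.2.1, h.2.2.2⟩
    · rw [if_neg h1, zero_mul, Set.indicator_of_notMem]
      exact fun h => h1 ⟨h.1, h.2.1⟩
  simp_rw [hpt]
  rw [(volume_preserving_piEquivPiSubtypeProd (fun _ : Fin n => ℝ) (fun i => i ∈ γ)).integral_comp'
    (fun z : ({i // i ∈ γ} → ℝ) × ({i // ¬ i ∈ γ} → ℝ) =>
          cut a b k (∑ i, (z.1 i) ^ 2) * cut a b l (∑ i, (z.2 i) ^ 2))]
  rw [Measure.volume_eq_prod, integral_prod_mul (fun x : {i // i ∈ γ} → ℝ => cut a b k (∑ i, (x i) ^ 2))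
    (fun x : {i // ¬ i ∈ γ} → ℝ => cut a b l (∑ i, (x i) ^ 2))]
  refine congrArg₂ (· * ·) ?_ ?_
  · convert block_int {i // i ∈ γ} a b ha hab k hk1 (by simp [hγ]) <;> rfl
  refine block_int {i // ¬ i ∈ γ} a b ha hab l hl1 ?_
  rw [Fintype.card_subtype_compl, Fintype.card_fin, Fintype.card_coe, hγ]
  omega

theorem log_blk (m : ℕ) (hm : 1 ≤ m) (s : ℝ) (hs : 0 < s) :
    0 < blk m s ∧ Real.log (blk m s) = Real.log (blk m 1) - (m : ℝ) / 2 * Real.log s := by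
  have hm' : (0 : ℝ) < m := by exact_mod_cast hm
  unfold blk
  refine ⟨by positivity, ?_⟩
  have e : 2 * Real.pi * (s / m) = (2 * Real.pi * (1 / m)) * s := by ring
  rw [e, Real.mul_rpow (by positivity) (by positivity), Real.log_mul (by positivity) (by positivity),
    Real.log_mul (by positivity) (by positivity), Real.log_mul (by positivity) (by positivity),
    Real.log_rpow hs]
  ring

theorem stmt_10 (n k : ℕ) (hn : 2 ≤ n) (γ : Finset (Fin n)) (hγ : γ.card = k)
    (hk1 : 1 ≤ k) (hk2 : k ≤ n - 1) (σmin σmax : ℝ) (h0 : 0 < σmin) (hσ : σmin < σmax)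
    (c : Fin n → ℝ) (hSg : 0 < Sg γ c) (hSN : 0 < Stot c - Sg γ c)
    (hI : Sg γ c / k ∈ Set.Icc σmin σmax)
    (hN : (Stot c - Sg γ c) / ((n : ℝ) - k) ∈ Set.Icc σmin σmax) :
    -Real.log
      (maxLik γ c /
        ∫ c' in {c' : Fin n → ℝ |
            σmin ≤ Sg γ c' / k ∧ Sg γ c' / k ≤ σmax ∧
            σmin ≤ (Stot c' - Sg γ c') / ((n : ℝ) - k) ∧
            (Stot c' - Sg γ c') / ((n : ℝ) - k) ≤ σmax},
          maxLik γ c')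
    = (k : ℝ) / 2 * Real.log (Sg γ c)
      + ((n : ℝ) - k) / 2 * Real.log (Stot c - Sg γ c)
      - Real.log (Real.Gamma ((k : ℝ) / 2))
      - Real.log (Real.Gamma (((n : ℝ) - k) / 2))
      + (n : ℝ) / 2 * Real.log Real.pi
      + 2 * Real.log (Real.log (σmax / σmin)) := by
  obtain ⟨l, hl⟩ : ∃ l, n = k + l := ⟨n - k, by omega⟩
  have hl1 : 1 ≤ l := by omega
  have e : (n : ℝ) - k = l := by rw [hl]; push_cast; ring
  have e' : (n : ℝ) = k + l := by rw [hl]; push_cast; ring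
  have hk' : (0 : ℝ) < k := by exact_mod_cast hk1
  have hl' : (0 : ℝ) < l := by exact_mod_cast hl1
  rw [e, region_int n k γ hγ hk1 l hl1 hl σmin σmax h0 hσ,
    maxLik_eq n k γ hγ hk1 l hl1 hl c hSg hSN]
  obtain ⟨p1, q1⟩ := log_blk k hk1 _ hSg
  obtain ⟨p2, q2⟩ := log_blk l hl1 _ hSN
  have p3 := (log_blk k hk1 1 one_pos).1
  have p4 := (log_blk l hl1 1 one_pos).1
  have g1 : 0 < Real.Gamma ((k : ℝ) / 2) := Real.Gamma_pos_of_pos (by positivity)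
  have g2 : 0 < Real.Gamma ((l : ℝ) / 2) := Real.Gamma_pos_of_pos (by positivity)
  have hL : 0 < Real.log (σmax / σmin) := Real.log_pos ((one_lt_div h0).2 hσ)
  have b : ∀ m : ℕ, 0 < Real.Gamma ((m : ℝ) / 2) → 0 < blk m 1 →
      0 < Real.pi ^ ((m : ℝ) / 2) / Real.Gamma ((m : ℝ) / 2) * blk m 1 * Real.log (σmax / σmin) ∧
      Real.log (Real.pi ^ ((m : ℝ) / 2) / Real.Gamma ((m : ℝ) / 2) * blk m 1 *
        Real.log (σmax / σmin)) = (m : ℝ) / 2 * Real.log Real.pi -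
          Real.log (Real.Gamma ((m : ℝ) / 2)) + Real.log (blk m 1) +
          Real.log (Real.log (σmax / σmin)) := by
    intro m g p
    have hp : 0 < Real.pi ^ ((m : ℝ) / 2) := Real.rpow_pos_of_pos Real.pi_pos _
    refine ⟨by positivity, ?_⟩
    rw [Real.log_mul (by positivity) hL.ne', Real.log_mul (by positivity) p.ne',
      Real.log_div hp.ne' g.ne', Real.log_rpow Real.pi_pos]
  obtain ⟨u1, v1⟩ := b k g1 p3
  obtain ⟨u2, v2⟩ := b l g2 p4
  rw [Real.log_div (mul_pos p1 p2).ne' (mul_pos u1 u2).ne', Real.log_mul p1.ne' p2.ne',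
    Real.log_mul u1.ne' u2.ne', v1, v2, q1, q2, e']
  ring
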